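/- Let a, b, b', c be complex numbers with c not a nonpositive integer, and let x, y be real numbers with |x| < 1 and |y| < 1 such that |x/(x−1)| < 1 and |(y−x)/(1−x)| < 1. Then F₁(a; b, b'; c; x, y) = (1−x)^{−a} · F₁(a; c−b−b', b'; c; x/(x−1), (y−x)/(1−x)). -/

import Mathlib

noncomputable def poch (a : ℂ) (n : ℕ) : ℂ := ∏ i ∈ Finset.range n, (a + i)

/-- Appell series F₁(a;b,b';c;x,y). -/
noncomputable def appellF1 (a b b' c x y : ℂ) : ℂ :=
  ∑' p : ℕ × ℕ, poch a (p.1 + p.2) * poch b p.1 * poch b' p.2 /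
    (p.1.factorial * p.2.factorial * poch c (p.1 + p.2)) * x ^ p.1 * y ^ p.2

open Filter Topology

theorem poch_zero (a : ℂ) : poch a 0 = 1 := by simp [poch]

theorem poch_succ (a : ℂ) (n : ℕ) : poch a (n + 1) = poch a n * (a + n) := by
  simp [poch, Finset.prod_range_succ]

theorem poch_add (a : ℂ) (m k : ℕ) : poch a (m + k) = poch a m * poch (a + m) k := by
  simp [poch, Finset.prod_range_add, add_assoc]

theorem poch_one (n : ℕ) : poch 1 n = n.factorial := by
  induction n with
  | zero => simp [poch]
  | succ n ih => rw [poch_succ, ih, Nat.factorial_succ]; push_cast; ring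

theorem poch_ne_zero {c : ℂ} (hc : ∀ n : ℕ, c ≠ -(n : ℂ)) (n : ℕ) : poch c n ≠ 0 := by
  rw [poch, Finset.prod_ne_zero_iff]
  intro i _ h
  exact hc i (eq_neg_of_add_eq_zero_left h)

theorem poch_ratio_bound (p q : ℂ) (hq : ∀ n : ℕ, q ≠ -(n : ℂ)) (r : ℝ) (hr : 1 < r) :
    ∃ K : ℝ, 0 ≤ K ∧ ∀ n, ‖poch p n / poch q n‖ ≤ K * r ^ n := by
  obtain ⟨N, hN⟩ := exists_nat_gt ((‖p‖ + r * ‖q‖) / (r - 1))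
  have hr0 : 0 < r := by linarith
  set w : ℕ → ℝ := fun n => ‖poch p n / poch q n‖ / r ^ n with hw
  have hw0 : ∀ n, 0 ≤ w n := fun n => by positivity
  have step : ∀ n, N ≤ n → w (n + 1) ≤ w n := by
    intro n hn
    have hn' : (‖p‖ + r * ‖q‖) / (r - 1) ≤ n := hN.le.trans (by exact_mod_cast hn)
    rw [div_le_iff₀ (by linarith)] at hn'
    have h1 : ‖p + n‖ ≤ ‖p‖ + n := (norm_add_le _ _).trans (by simp)
    have h2 : (n : ℝ) - ‖q‖ ≤ ‖q + n‖ := by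
      have := norm_sub_norm_le (n : ℂ) (-q)
      simp only [norm_neg, sub_neg_eq_add, Complex.norm_natCast] at this
      rwa [add_comm] at this
    have h3 : ‖p + n‖ ≤ r * ‖q + n‖ := by nlinarith
    have hqn : 0 < ‖q + n‖ := by
      rw [norm_pos_iff]; intro h; exact hq n (eq_neg_of_add_eq_zero_left h)
    have : w (n + 1) = w n * (‖p + n‖ / (r * ‖q + n‖)) := by
      simp only [hw, poch_succ, norm_div, norm_mul, pow_succ]
      field_simp
    rw [this]
    exact mul_le_of_le_one_right (hw0 n) ((div_le_one (by positivity)).2 h3)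
  refine ⟨∑ i ∈ Finset.range (N + 1), w i, Finset.sum_nonneg fun i _ => hw0 i, fun n => ?_⟩
  suffices h : w n ≤ ∑ i ∈ Finset.range (N + 1), w i by
    exact (div_le_iff₀ (by positivity)).1 h
  have key : ∀ n, n ≤ N → w n ≤ ∑ i ∈ Finset.range (N + 1), w i := fun n hn =>
    Finset.single_le_sum (f := w) (fun i _ => hw0 i) (Finset.mem_range.2 (by omega))
  rcases le_total n N with h | h
  · exact key n h
  · induction n, h using Nat.le_induction with
    | base => exact key N le_rfl
    | succ n hn ih => exact (step n hn).trans ih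

/-- Normalised Pochhammer symbol. -/
noncomputable def chp (a : ℂ) (n : ℕ) : ℂ := poch a n / n.factorial

theorem one_good : ∀ n : ℕ, (1 : ℂ) ≠ -(n : ℂ) := by
  intro n h
  have : ((n + 1 : ℕ) : ℂ) = 0 := by push_cast; rw [h]; ring
  exact absurd (Nat.cast_eq_zero.1 this) (by omega)

theorem chp_bound (a : ℂ) (r : ℝ) (hr : 1 < r) :
    ∃ K : ℝ, 0 ≤ K ∧ ∀ n, ‖chp a n‖ ≤ K * r ^ n := by
  simpa [chp, poch_one] using poch_ratio_bound a 1 one_good r hr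

theorem chp_eq_choose (a : ℂ) (n : ℕ) : chp a n = Ring.choose (a + n - 1) n := by
  rw [← Ring.multichoose_eq, chp, div_eq_iff (by exact_mod_cast n.factorial_ne_zero), mul_comm,
    ← nsmul_eq_mul, Ring.factorial_nsmul_multichoose_eq_ascPochhammer,
    Polynomial.ascPochhammer_smeval_eq_eval]
  induction n with
  | zero => simp [poch]
  | succ n ih => rw [poch_succ, ih, ascPochhammer_succ_eval]

theorem binom_hasSum (a z : ℂ) (hz : ‖z‖ < 1) :
    HasSum (fun n => chp a n * z ^ n) ((1 - z) ^ (-a)) := by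
  have := (Complex.one_div_one_sub_cpow_hasFPowerSeriesOnBall_zero a).hasSum (y := z)
    (by simpa [← ofReal_norm] using hz)
  simp only [FormalMultilinearSeries.ofScalars_apply_eq, zero_add, one_div, smul_eq_mul,
    ← chp_eq_choose] at this
  rwa [Complex.cpow_neg]

theorem exists_r (u v : ℝ) (hu0 : 0 ≤ u) (hv0 : 0 ≤ v) (hu : u < 1) (hv : v < 1) :
    ∃ r : ℝ, 1 < r ∧ r * r * u < 1 ∧ r * r * v < 1 := by
  have h : ∀ w : ℝ, w < 1 → ∀ᶠ r : ℝ in 𝓝[>] 1, r * r * w < 1 := by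
    intro w hw
    have : Tendsto (fun r : ℝ => r * r * w) (𝓝[>] 1) (𝓝 (1 * 1 * w)) :=
      ((Continuous.tendsto (by fun_prop) 1)).mono_left nhdsWithin_le_nhds
    exact this.eventually_lt_const (by simpa using hw)
  obtain ⟨r, h1, h2, h3⟩ := ((h u hu).and ((h v hv).and self_mem_nhdsWithin)).exists
  exact ⟨r, h3, h1, h2⟩

/-- General term. -/
noncomputable def trm (a b b' c : ℂ) (p : ℕ × ℕ) : ℂ :=
  poch a (p.1 + p.2) / poch c (p.1 + p.2) * (chp b p.1 * chp b' p.2)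

theorem appellF1_eq (a b b' c x y : ℂ) :
    appellF1 a b b' c x y = ∑' p : ℕ × ℕ, trm a b b' c p * x ^ p.1 * y ^ p.2 := by
  unfold appellF1 trm chp
  congr 1; ext p
  congr 2
  simp only [div_eq_mul_inv, mul_inv]
  ring

theorem geom2_summable (u v : ℝ) (hu0 : 0 ≤ u) (hv0 : 0 ≤ v) (hu : u < 1) (hv : v < 1) :
    Summable (fun p : ℕ × ℕ => u ^ p.1 * v ^ p.2) :=
  (summable_geometric_of_lt_one hu0 hu).mul_of_nonneg (summable_geometric_of_lt_one hv0 hv)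
    (fun _ => by positivity) (fun _ => by positivity)

theorem trm_summable (a b b' c : ℂ) (hc : ∀ n : ℕ, c ≠ -(n : ℂ)) (x y : ℂ)
    (hx : ‖x‖ < 1) (hy : ‖y‖ < 1) :
    Summable (fun p : ℕ × ℕ => ‖trm a b b' c p * x ^ p.1 * y ^ p.2‖) := by
  obtain ⟨r, hr, h1, h2⟩ := exists_r ‖x‖ ‖y‖ (norm_nonneg _) (norm_nonneg _) hx hy
  obtain ⟨K, hK, hKb⟩ := poch_ratio_bound a c hc r hr
  obtain ⟨K1, hK1, hKb1⟩ := chp_bound b r hr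
  obtain ⟨K2, hK2, hKb2⟩ := chp_bound b' r hr
  have hr0 : 0 < r := by linarith
  refine Summable.of_nonneg_of_le (fun _ => norm_nonneg _) (fun p => ?_)
    ((geom2_summable _ _ (by positivity) (by positivity) h1 h2).mul_left (K * (K1 * K2)))
  calc ‖trm a b b' c p * x ^ p.1 * y ^ p.2‖
      = ‖poch a (p.1 + p.2) / poch c (p.1 + p.2)‖ * (‖chp b p.1‖ * ‖chp b' p.2‖)
          * ‖x‖ ^ p.1 * ‖y‖ ^ p.2 := by simp [trm]
    _ ≤ (K * r ^ (p.1 + p.2)) * ((K1 * r ^ p.1) * (K2 * r ^ p.2)) * ‖x‖ ^ p.1 * ‖y‖ ^ p.2 := by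
        gcongr
        · exact hKb _
        · exact hKb1 _
        · exact hKb2 _
    _ = _ := by rw [mul_pow, mul_pow, mul_pow, mul_pow, pow_add]; ring

theorem antidiag_hasSum (F : ℕ × ℕ → ℂ) (s : ℂ) (h : HasSum F s) :
    HasSum (fun N => ∑ p ∈ Finset.HasAntidiagonal.antidiagonal N, F p) s := by
  have h' := (Finset.HasAntidiagonal.sigmaAntidiagonalEquivProd (A := ℕ)).hasSum_iff.2 h
  refine h'.sigma fun N => ?_
  have := hasSum_fintype (fun p : Finset.HasAntidiagonal.antidiagonal N => F p)
  rw [Finset.sum_coe_sort (Finset.HasAntidiagonal.antidiagonal N) F] at this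
  exact this

noncomputable def hom (b b' x y : ℂ) (N : ℕ) : ℂ :=
  ∑ p ∈ Finset.HasAntidiagonal.antidiagonal N, chp b p.1 * chp b' p.2 * x ^ p.1 * y ^ p.2

theorem F1_hasSum (a b b' c : ℂ) (hc : ∀ n : ℕ, c ≠ -(n : ℂ)) (x y s : ℂ)
    (hx : ‖s * x‖ < 1) (hy : ‖s * y‖ < 1) :
    HasSum (fun N => poch a N / poch c N * hom b b' x y N * s ^ N)
      (appellF1 a b b' c (s * x) (s * y)) := by
  have h := antidiag_hasSum _ _ (trm_summable a b b' c hc _ _ hx hy).of_norm.hasSum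
  rw [← appellF1_eq] at h
  convert h using 2 with N
  rw [hom, Finset.mul_sum, Finset.sum_mul]
  refine Finset.sum_congr rfl fun p hp => ?_
  rw [Finset.HasAntidiagonal.mem_antidiagonal] at hp
  rw [trm, hp, ← hp, mul_pow, mul_pow, pow_add]
  ring

theorem hom_hasSum (b b' x y s : ℂ) (hx : ‖s * x‖ < 1) (hy : ‖s * y‖ < 1) :
    HasSum (fun N => hom b b' x y N * s ^ N)
      ((1 - s * x) ^ (-b) * (1 - s * y) ^ (-b')) := by
  have hs := (trm_summable 1 b b' 1 one_good _ _ hx hy).of_norm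
  have e : ∀ p : ℕ × ℕ, trm 1 b b' 1 p * (s * x) ^ p.1 * (s * y) ^ p.2 =
      (chp b p.1 * (s * x) ^ p.1) * (chp b' p.2 * (s * y) ^ p.2) := by
    intro p; rw [trm, div_self (poch_ne_zero one_good _)]; ring
  simp only [e] at hs
  have h := antidiag_hasSum _ _ ((binom_hasSum b _ hx).mul (binom_hasSum b' _ hy) hs)
  convert h using 2 with N
  rw [hom, Finset.sum_mul]
  refine Finset.sum_congr rfl fun p hp => ?_
  rw [Finset.HasAntidiagonal.mem_antidiagonal] at hp
  rw [← hp, mul_pow, mul_pow, pow_add]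
  ring

theorem coeff_bound (A : ℕ → ℂ) (s : ℂ) (hs : s ≠ 0) (h : Summable fun N => A N * s ^ N) :
    ∃ K L : ℝ, 0 ≤ K ∧ 0 ≤ L ∧ ∀ N, ‖A N‖ ≤ K * L ^ N := by
  obtain ⟨K, hK⟩ := h.tendsto_atTop_zero.norm.bddAbove_range
  have hK' : ∀ N, ‖A N * s ^ N‖ ≤ K := fun N => hK ⟨N, rfl⟩
  refine ⟨K, ‖s‖⁻¹, (norm_nonneg _).trans (hK' 0), by positivity, fun N => ?_⟩
  have := hK' N
  rw [norm_mul, norm_pow] at this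
  rw [inv_pow, ← div_eq_mul_inv, le_div_iff₀ (by positivity)]
  exact this

theorem chp_shift_bound (a : ℂ) : ∃ K : ℝ, 0 ≤ K ∧ ∀ M k : ℕ,
    ‖chp (a + M) k‖ ≤ K * 2 ^ M * 2 ^ k := by
  obtain ⟨A, hA⟩ := exists_nat_ge ‖a‖
  refine ⟨2 ^ A, by positivity, fun M k => ?_⟩
  have h1 : ‖poch (a + M) k‖ ≤ ((A + M + 1).ascFactorial k : ℕ) := by
    induction k with
    | zero => simp [poch]
    | succ k ih =>
      rw [poch_succ, Nat.ascFactorial_succ, norm_mul, Nat.cast_mul, mul_comm]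
      gcongr
      have e1 : ‖a + M + k‖ ≤ ‖a‖ + M + k := by
        refine (norm_add₃_le).trans (by simp)
      push_cast
      linarith
  rw [Nat.ascFactorial_eq_factorial_mul_choose] at h1
  have hk : (0 : ℝ) < k.factorial := by exact_mod_cast k.factorial_pos
  rw [chp, norm_div, Complex.norm_natCast, div_le_iff₀ hk]
  refine h1.trans ?_
  have h2 : ((A + M + k).choose k : ℝ) ≤ 2 ^ (A + M + k) := by
    exact_mod_cast Nat.choose_le_two_pow _ _
  push_cast
  rw [← pow_add, ← pow_add, mul_comm]
  gcongr

theorem shift_hasSum (a x : ℂ) (Q : ℕ → ℂ) (K L : ℝ) (hK : 0 ≤ K) (hL : 0 ≤ L)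
    (hQ : ∀ N, ‖Q N‖ ≤ K * L ^ N) :
    ∀ᶠ t : ℂ in 𝓝 0, HasSum (fun N => (∑ p ∈ Finset.HasAntidiagonal.antidiagonal N,
      chp (a + (p.1 : ℕ)) p.2 * x ^ p.2 * Q p.1) * t ^ N)
      ((1 - t * x) ^ (-a) * ∑' M, Q M * (t / (1 - t * x)) ^ M) := by
  have ev : ∀ w : ℝ, ∀ᶠ t : ℂ in 𝓝 0, w * ‖t‖ < 1 := by
    intro w
    have : Tendsto (fun t : ℂ => w * ‖t‖) (𝓝 0) (𝓝 (w * ‖(0 : ℂ)‖)) :=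
      Continuous.tendsto (by fun_prop) 0
    exact this.eventually_lt_const (by simp)
  obtain ⟨C, hC, hCb⟩ := chp_shift_bound a
  filter_upwards [ev ‖x‖, ev (2 * ‖x‖), ev (2 * L)] with t h1 h2 h3
  have h1' : ‖t * x‖ < 1 := by rw [norm_mul, mul_comm]; exact h1
  have hne : 1 - t * x ≠ 0 := by
    intro h
    rw [← sub_eq_zero.1 h] at h1'
    simp at h1'
  obtain ⟨F, hF⟩ : ∃ F : ℕ × ℕ → ℂ, ∀ p, F p =
      Q p.1 * t ^ p.1 * (chp (a + (p.1 : ℕ)) p.2 * (t * x) ^ p.2) := ⟨_, fun _ => rfl⟩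
  have hs : Summable F := by
    refine Summable.of_norm_bounded
      ((geom2_summable _ _ (by positivity) (by positivity) h3 h2).mul_left (K * C)) (fun p => ?_)
    calc ‖F p‖ = ‖Q p.1‖ * ‖t‖ ^ p.1 * (‖chp (a + (p.1 : ℕ)) p.2‖ * (‖t‖ * ‖x‖) ^ p.2) := by
          simp [hF]
      _ ≤ (K * L ^ p.1) * ‖t‖ ^ p.1 * ((C * 2 ^ p.1 * 2 ^ p.2) * (‖t‖ * ‖x‖) ^ p.2) := by
          gcongr
          · exact hQ _
          · exact hCb _ _
      _ = _ := by simp only [mul_pow]; ring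
  have hsum := hs.hasSum
  have hfib := hsum.prod_fiberwise
    (g := fun M : ℕ => Q M * t ^ M * (1 - t * x) ^ (-(a + (M : ℂ)))) (fun M => by
      simp only [hF]
      exact (binom_hasSum (a + (M : ℂ)) _ h1').mul_left _)
  have e : ∀ M : ℕ, Q M * t ^ M * (1 - t * x) ^ (-(a + (M : ℂ))) =
      (1 - t * x) ^ (-a) * (Q M * (t / (1 - t * x)) ^ M) := by
    intro M
    rw [neg_add, ← sub_eq_add_neg, Complex.cpow_sub _ _ hne, Complex.cpow_natCast, div_pow]
    ring
  simp only [e] at hfib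
  have heq : (1 - t * x) ^ (-a) * ∑' M, Q M * (t / (1 - t * x)) ^ M = ∑' p, F p := by
    rw [← tsum_mul_left]; exact hfib.tsum_eq
  rw [heq]
  convert antidiag_hasSum F _ hsum using 2 with N
  rw [Finset.sum_mul]
  refine Finset.sum_congr rfl fun p hp => ?_
  rw [Finset.HasAntidiagonal.mem_antidiagonal] at hp
  rw [hF, ← hp, mul_pow, pow_add]
  ring

theorem coeff_unique (A B : ℕ → ℂ) (f : ℂ → ℂ)
    (hA : ∀ᶠ t : ℂ in 𝓝 0, HasSum (fun N => A N * t ^ N) (f t))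
    (hB : ∀ᶠ t : ℂ in 𝓝 0, HasSum (fun N => B N * t ^ N) (f t)) : A = B := by
  have key : ∀ D : ℕ → ℂ, (∀ᶠ t : ℂ in 𝓝 0, HasSum (fun N => D N * t ^ N) (f t)) →
      HasFPowerSeriesAt f (FormalMultilinearSeries.ofScalars ℂ D) 0 := by
    intro D hD
    rw [hasFPowerSeriesAt_iff]
    filter_upwards [hD] with t ht
    simpa [mul_comm] using ht
  have h := (key A hA).eq_formalMultilinearSeries (key B hB)
  ext n
  have := congrArg (fun p => FormalMultilinearSeries.coeff p n) h
  simpa using this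

theorem ev_lt (w : ℂ) : ∀ᶠ t : ℂ in 𝓝 0, ‖t * w‖ < 1 := by
  have : Tendsto (fun t : ℂ => ‖t * w‖) (𝓝 0) (𝓝 (‖(0 : ℂ) * w‖)) :=
    Continuous.tendsto (by fun_prop) 0
  exact this.eventually_lt_const (by simp)

theorem tendsto_s (x : ℂ) : Tendsto (fun t : ℂ => t / (1 - t * x)) (𝓝 0) (𝓝 0) := by
  have : ContinuousAt (fun t : ℂ => t / (1 - t * x)) 0 := by
    refine ContinuousAt.div (by fun_prop) (by fun_prop) (by simp)
  simpa [ContinuousAt] using this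

theorem ev_ne (x : ℂ) : ∀ᶠ t : ℂ in 𝓝 0, 1 - t * x ≠ 0 := by
  filter_upwards [ev_lt x] with t ht h
  rw [← sub_eq_zero.1 h] at ht
  simp at ht

theorem exists_small (x y : ℂ) : ∃ s : ℂ, s ≠ 0 ∧ ‖s * x‖ < 1 ∧ ‖s * y‖ < 1 := by
  have h := ((ev_lt x).and (ev_lt y)).filter_mono (nhdsWithin_le_nhds (s := {0}ᶜ))
  obtain ⟨s, h, hs⟩ := (h.and self_mem_nhdsWithin).exists
  exact ⟨s, hs, h⟩

theorem cpow_identity (b b' c u w : ℂ) (hu : 0 < u.re) (hw : 0 < w.re) :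
    u ^ (-c) * ((u⁻¹) ^ (-(c - b - b')) * (w / u) ^ (-b')) = u ^ (-b) * w ^ (-b') := by
  have hu0 : u ≠ 0 := by rintro rfl; simp at hu
  have hw0 : w ≠ 0 := by rintro rfl; simp at hw
  have hpi := Real.pi_pos
  have au := abs_lt.1 (Complex.abs_arg_lt_pi_div_two_iff.2 (Or.inl hu))
  have aw := abs_lt.1 (Complex.abs_arg_lt_pi_div_two_iff.2 (Or.inl hw))
  have hune : u.arg ≠ Real.pi := by intro h; linarith [au.2]
  have l1 : Complex.log u⁻¹ = -Complex.log u := Complex.log_inv _ hune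
  have l2 : Complex.log (w / u) = Complex.log w - Complex.log u := by
    rw [div_eq_mul_inv, Complex.log_mul hw0 (inv_ne_zero hu0), l1, sub_eq_add_neg]
    rw [Complex.arg_inv, if_neg hune]
    constructor <;> linarith [au.1, au.2, aw.1, aw.2]
  rw [Complex.cpow_def_of_ne_zero hu0, Complex.cpow_def_of_ne_zero (inv_ne_zero hu0),
    Complex.cpow_def_of_ne_zero (div_ne_zero hw0 hu0), Complex.cpow_def_of_ne_zero hu0,
    Complex.cpow_def_of_ne_zero hw0, l1, l2, ← Complex.exp_add, ← Complex.exp_add,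
    ← Complex.exp_add]
  congr 1
  ring

theorem one_sub_re_pos (z : ℂ) (h : ‖z‖ < 1) : 0 < (1 - z).re := by
  have := (Complex.abs_re_le_norm z)
  have := (abs_le.1 this).2
  simp only [Complex.sub_re, Complex.one_re]
  linarith

theorem hom_identity (b b' c x y : ℂ) (N : ℕ) :
    hom b b' x y N = ∑ p ∈ Finset.HasAntidiagonal.antidiagonal N,
      chp (c + (p.1 : ℕ)) p.2 * x ^ p.2 * hom (c - b - b') b' (-x) (y - x) p.1 := by
  refine congrFun (coeff_unique (hom b b' x y) (fun N =>
    ∑ p ∈ Finset.HasAntidiagonal.antidiagonal N,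
      chp (c + (p.1 : ℕ)) p.2 * x ^ p.2 * hom (c - b - b') b' (-x) (y - x) p.1) (fun t => (1 - t * x) ^ (-b) * (1 - t * y) ^ (-b')) ?_ ?_) N
  · filter_upwards [ev_lt x, ev_lt y] with t hx hy using hom_hasSum _ _ _ _ _ hx hy
  · obtain ⟨s, hs0, hs1, hs2⟩ := exists_small (-x) (y - x)
    obtain ⟨K, L, hK, hL, hb⟩ := coeff_bound _ s hs0
      (hom_hasSum (c - b - b') b' _ _ _ hs1 hs2).summable
    filter_upwards [shift_hasSum c x _ K L hK hL hb, ev_lt x, ev_lt y, ev_ne x,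
      (tendsto_s x).eventually (ev_lt (-x)), (tendsto_s x).eventually (ev_lt (y - x))]
      with t h hx hy hne h1 h2
    rw [(hom_hasSum (c - b - b') b' _ _ _ h1 h2).tsum_eq] at h
    convert h using 1
    rw [← cpow_identity b b' c _ _ (one_sub_re_pos _ hx) (one_sub_re_pos _ hy)]
    congr 3
    · field_simp; ring
    · field_simp; ring

theorem near_zero (a b b' c x y : ℂ) (hc : ∀ n : ℕ, c ≠ -(n : ℂ)) :
    ∀ᶠ t : ℂ in 𝓝 0, appellF1 a b b' c (t * x) (t * y) = (1 - t * x) ^ (-a) *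
      appellF1 a (c - b - b') b' c (t / (1 - t * x) * (-x)) (t / (1 - t * x) * (y - x)) := by
  obtain ⟨s, hs0, hs1, hs2⟩ := exists_small (-x) (y - x)
  obtain ⟨K, L, hK, hL, hb⟩ := coeff_bound _ s hs0
    (F1_hasSum a (c - b - b') b' c hc _ _ _ hs1 hs2).summable
  filter_upwards [shift_hasSum a x _ K L hK hL hb, ev_lt x, ev_lt y,
      (tendsto_s x).eventually (ev_lt (-x)), (tendsto_s x).eventually (ev_lt (y - x))]
      with t h hx hy h1 h2
  rw [(F1_hasSum a (c - b - b') b' c hc _ _ _ h1 h2).tsum_eq] at h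
  refine HasSum.unique (F1_hasSum a b b' c hc x y t hx hy) ?_
  convert h using 2 with N
  congr 1
  rw [hom_identity b b' c x y N, Finset.mul_sum]
  refine Finset.sum_congr rfl fun p hp => ?_
  rw [Finset.HasAntidiagonal.mem_antidiagonal] at hp
  have hc1 := poch_ne_zero hc p.1
  have hc2 := poch_ne_zero hc (p.1 + p.2)
  rw [poch_add] at hc2
  have hc3 := right_ne_zero_of_mul hc2
  have hf : (p.2.factorial : ℂ) ≠ 0 := by exact_mod_cast p.2.factorial_ne_zero
  rw [← hp, poch_add a, poch_add c, chp, chp]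
  field_simp

theorem F1_analytic (a b b' c x y : ℂ) (hc : ∀ n : ℕ, c ≠ -(n : ℂ)) (t : ℂ)
    (hx : ‖t * x‖ < 1) (hy : ‖t * y‖ < 1) :
    AnalyticAt ℂ (fun t => appellF1 a b b' c (t * x) (t * y)) t := by
  have ev : ∀ w : ℂ, ‖t * w‖ < 1 → ∀ᶠ r : ℝ in 𝓝[>] ‖t‖, r * ‖w‖ < 1 := by
    intro w hw
    have : Tendsto (fun r : ℝ => r * ‖w‖) (𝓝[>] ‖t‖) (𝓝 (‖t‖ * ‖w‖)) :=
      ((Continuous.tendsto (by fun_prop) _)).mono_left nhdsWithin_le_nhds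
    exact this.eventually_lt_const (by simpa using hw)
  obtain ⟨r, h1, h2, h3⟩ := ((ev x hx).and ((ev y hy).and self_mem_nhdsWithin)).exists
  have h3 : ‖t‖ < r := h3
  have hr : 0 < r := (norm_nonneg _).trans_lt h3
  have hs := trm_summable a b b' c hc (r * x) (r * y)
    (by simpa [abs_of_pos hr] using h1) (by simpa [abs_of_pos hr] using h2)
  have hd : DifferentiableOn ℂ (fun t => appellF1 a b b' c (t * x) (t * y))
      (Metric.ball 0 r) := by
    simp only [appellF1_eq]
    refine Complex.differentiableOn_tsum_of_summable_norm hs (fun p => ?_) Metric.isOpen_ball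
      (fun p w hw => ?_)
    · fun_prop
    · have hw' : ‖w‖ ≤ r := by simpa using (mem_ball_zero_iff.1 hw).le
      simp only [norm_mul, norm_pow, Complex.norm_real, Real.norm_eq_abs, abs_of_pos hr]
      gcongr
  exact hd.analyticAt (Metric.isOpen_ball.mem_nhds (by simpa using h3))

theorem appellF1_transformation_second (a b b' c : ℂ) (x y : ℝ)
    (hc : ∀ n : ℕ, c ≠ -(n : ℂ))
    (hx : |x| < 1) (hy : |y| < 1)
    (hx' : |x / (x - 1)| < 1) (hyx : |(y - x) / (1 - x)| < 1) :
    appellF1 a b b' c x y =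
      ((1 : ℂ) - x) ^ (-a) *
        appellF1 a (c - b - b') b' c ((x : ℂ) / (x - 1)) (((y : ℂ) - x) / (1 - x)) := by
  have hx1 : 0 < 1 - x := by linarith [(abs_lt.1 hx).2]
  have k1 : |x| < 1 - x := by
    rw [abs_div, abs_sub_comm x 1, abs_of_pos hx1, div_lt_one hx1] at hx'
    exact hx'
  have k2 : |y - x| < 1 - x := by
    rw [abs_div, abs_of_pos hx1, div_lt_one hx1] at hyx
    exact hyx
  set U : Set ℂ := (fun u : ℝ => (u : ℂ)) '' Set.Icc 0 1 with hU
  have hpos : ∀ u : ℝ, u ∈ Set.Icc (0 : ℝ) 1 → 0 < 1 - u * x := by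
    rintro u ⟨h0, h1⟩
    have : u * |x| ≤ |x| := mul_le_of_le_one_left (abs_nonneg _) h1
    have : u * x ≤ u * |x| := by gcongr; exact le_abs_self x
    linarith
  have hs : ∀ w : ℝ, |w| < 1 - x → ∀ u : ℝ, u ∈ Set.Icc (0 : ℝ) 1 →
      ‖(u : ℂ) / (1 - u * x) * (w : ℂ)‖ < 1 := by
    intro w hw u hu
    have hp := hpos u hu
    have : (u : ℂ) / (1 - u * x) * (w : ℂ) = ((u * w / (1 - u * x) : ℝ) : ℂ) := by
      push_cast; ring
    rw [this, Complex.norm_real, Real.norm_eq_abs, abs_div, abs_of_pos hp, div_lt_one hp, abs_mul,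
      abs_of_nonneg hu.1]
    rcases hu.1.eq_or_lt with h | h
    · simp [← h]
    · have := mul_lt_mul_of_pos_left hw h
      linarith [hu.2]
  have ht : ∀ w : ℝ, |w| < 1 → ∀ u : ℝ, u ∈ Set.Icc (0 : ℝ) 1 → ‖(u : ℂ) * (w : ℂ)‖ < 1 := by
    intro w hw u hu
    rw [norm_mul, Complex.norm_real, Complex.norm_real, Real.norm_eq_abs, Real.norm_eq_abs,
      abs_of_nonneg hu.1]
    exact (mul_le_of_le_one_left (abs_nonneg _) hu.2).trans_lt hw
  have hf : AnalyticOnNhd ℂ (fun t : ℂ => appellF1 a b b' c (t * x) (t * y)) U := by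
    rintro _ ⟨u, hu, rfl⟩
    exact F1_analytic a b b' c x y hc _ (ht x hx u hu) (ht y hy u hu)
  have hg : AnalyticOnNhd ℂ (fun t : ℂ => (1 - t * x) ^ (-a) *
      appellF1 a (c - b - b') b' c (t / (1 - t * x) * (-x)) (t / (1 - t * x) * (y - x))) U := by
    rintro _ ⟨u, hu, rfl⟩
    have hp := hpos u hu
    have hsl : (1 - (u : ℂ) * x) ∈ Complex.slitPlane := by
      left
      have : (1 - (u : ℂ) * x) = ((1 - u * x : ℝ) : ℂ) := by push_cast; ring
      rw [this, Complex.ofReal_re]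
      exact hp
    have hlin : AnalyticAt ℂ (fun t : ℂ => 1 - t * x) (u : ℂ) := by fun_prop
    have hq : AnalyticAt ℂ (fun t : ℂ => t / (1 - t * x)) (u : ℂ) :=
      analyticAt_id.div hlin (Complex.slitPlane_ne_zero hsl)
    refine (hlin.cpow analyticAt_const hsl).mul ?_
    refine AnalyticAt.fun_comp (g := fun s : ℂ => appellF1 a (c - b - b') b' c (s * (-x)) (s * (y - x)))
      ?_ hq
    refine F1_analytic _ _ _ _ _ _ hc _ ?_ ?_
    · have := hs (-x) (by simpa using k1) u hu
      simpa using this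
    · have := hs (y - x) k2 u hu
      simpa using this
  have hpre : IsPreconnected U :=
    isPreconnected_Icc.image _ Complex.continuous_ofReal.continuousOn
  have h0 : (0 : ℂ) ∈ U := ⟨0, by simp, by simp⟩
  have h1 : (1 : ℂ) ∈ U := ⟨1, by simp, by simp⟩
  have := hf.eqOn_of_preconnected_of_eventuallyEq hg hpre h0 (near_zero a b b' c x y hc) h1
  simp only [one_mul] at this
  rw [this]
  have hne : (1 - (x : ℂ)) ≠ 0 := by exact_mod_cast hx1.ne'
  have hne' : ((x : ℂ) - 1) ≠ 0 := by rw [← neg_sub]; exact neg_ne_zero.2 hne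
  congr 2
  · field_simp; ring
  · field_simp
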